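/- arXiv:1401.5037 — 2 statements merged into one kernel-verified Lean document; each statement's English description precedes it below -/
import Mathlib

section
/- Let m ≥ 3 and let Ω = {B ⊂ [m] : 1 ≤ |B| ≤ m−2}. The singleton partition S satisfies Δ(S) < Δ(P) for every partition P of [m] with |P| ≥ 2 and P ≠ S if and only if Δ(S) < Δ(P_B) for every B ∈ Ω. (Proposition 1(b).) -/
open MeasureTheory Finset

/-- Shannon entropy (natural log) of a random variable with values in a finite set. -/
noncomputable def shannonEntropy {Ω : Type*} [MeasurableSpace Ω] (μ : Measure Ω)
    {S : Type*} [Fintype S] (Y : Ω → S) : ℝ :=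
  ∑ s : S, Real.negMulLog (μ (Y ⁻¹' {s})).toReal

/-- `HX μ X A` is the Shannon entropy of the tuple `X_A = (X_i : i ∈ A)`. -/
noncomputable def HX {m : ℕ} {Ω : Type*} [MeasurableSpace Ω] (μ : Measure Ω)
    {𝒳 : Fin m → Type*} [∀ i, Fintype (𝒳 i)] (X : ∀ i, Ω → 𝒳 i)
    (A : Finset (Fin m)) : ℝ :=
  shannonEntropy μ (fun ω => fun i : A => X i ω)

/-- Conditional entropy `H(X_A | X_B)`. -/
noncomputable def condEnt {m : ℕ} {Ω : Type*} [MeasurableSpace Ω] (μ : Measure Ω)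
    {𝒳 : Fin m → Type*} [∀ i, Fintype (𝒳 i)] (X : ∀ i, Ω → 𝒳 i)
    (A B : Finset (Fin m)) : ℝ :=
  HX μ X (A ∪ B) - HX μ X B

/-- `P` is a partition of `[m]` into nonempty cells. -/
def IsPartition {m : ℕ} (P : Finset (Finset (Fin m))) : Prop :=
  (∀ A ∈ P, A.Nonempty) ∧ ∀ i : Fin m, ∃! A, A ∈ P ∧ i ∈ A

/-- The singleton partition `S = {{1},…,{m}}` of `[m]`. -/
def sPart (m : ℕ) : Finset (Finset (Fin m)) := Finset.univ.image fun i => {i}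

/-- `Δ(P) = (1/(|P|−1))·[Σ_{A∈P} H(X_A) − H(X_{[m]})]`. -/
noncomputable def ΔP {m : ℕ} {Ω : Type*} [MeasurableSpace Ω] (μ : Measure Ω)
    {𝒳 : Fin m → Type*} [∀ i, Fintype (𝒳 i)] (X : ∀ i, Ω → 𝒳 i)
    (P : Finset (Finset (Fin m))) : ℝ :=
  (1 / ((P.card : ℝ) - 1)) * (∑ A ∈ P, HX μ X A - HX μ X Finset.univ)

/-- For nonempty `B ⊊ [m]`, the partition `P_B` consisting of the cell `Bᶜ`
together with the singleton cells `{b}`, `b ∈ B`. -/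
def partB {m : ℕ} (B : Finset (Fin m)) : Finset (Finset (Fin m)) :=
  insert Bᶜ (B.image fun b => ({b} : Finset (Fin m)))

theorem aux_sum {m : ℕ} {P : Finset (Finset (Fin m))} (hP : IsPartition P) (f : Fin m → ℝ) :
    ∑ A ∈ P, ∑ i ∈ A, f i = ∑ i, f i := by
  classical
  rw [Finset.sum_comm' (t' := Finset.univ) (s' := fun i => P.filter (fun A => i ∈ A))
    (by intro A i; simp)]
  refine Finset.sum_congr rfl fun i _ => ?_
  obtain ⟨A, hA, hu⟩ := hP.2 i
  have : P.filter (fun A => i ∈ A) = {A} := by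
    ext C
    simp only [Finset.mem_filter, Finset.mem_singleton]
    exact ⟨fun h => hu C h, fun h => h ▸ hA⟩
  rw [this, Finset.sum_singleton]

theorem aux_notMem {m : ℕ} {B : Finset (Fin m)} (h : 2 ≤ Bᶜ.card) :
    Bᶜ ∉ B.image fun b => ({b} : Finset (Fin m)) := by
  intro h'
  obtain ⟨b, -, hb⟩ := Finset.mem_image.1 h'
  rw [← hb] at h
  simp at h

theorem aux_card {m : ℕ} {B : Finset (Fin m)} (h : 2 ≤ Bᶜ.card) :
    (partB B).card = B.card + 1 := by
  rw [partB, Finset.card_insert_of_notMem (aux_notMem h),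
    Finset.card_image_of_injective _ Finset.singleton_injective]

theorem aux_sumB {m : ℕ} {B : Finset (Fin m)} (h : 2 ≤ Bᶜ.card) (f : Finset (Fin m) → ℝ) :
    ∑ A ∈ partB B, f A = f Bᶜ + ∑ b ∈ B, f {b} := by
  rw [partB, Finset.sum_insert (aux_notMem h),
    Finset.sum_image (fun _ _ _ _ h => Finset.singleton_injective h)]

theorem aux_part {m : ℕ} {B : Finset (Fin m)} (h : 2 ≤ Bᶜ.card) : IsPartition (partB B) := by
  constructor
  · intro A hA
    rcases Finset.mem_insert.1 hA with rfl | hA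
    · exact Finset.card_pos.1 (by omega)
    · obtain ⟨b, -, rfl⟩ := Finset.mem_image.1 hA
      exact Finset.singleton_nonempty b
  · intro i
    by_cases hi : i ∈ B
    · refine ⟨{i}, ⟨by simp [partB, hi], by simp⟩, ?_⟩
      rintro A ⟨hA, hiA⟩
      rcases Finset.mem_insert.1 hA with rfl | hA
      · simp [hi] at hiA
      · obtain ⟨b, -, rfl⟩ := Finset.mem_image.1 hA
        rw [Finset.mem_singleton.1 hiA]
    · refine ⟨Bᶜ, ⟨by simp [partB], by simp [hi]⟩, ?_⟩
      rintro A ⟨hA, hiA⟩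
      rcases Finset.mem_insert.1 hA with rfl | hA
      · rfl
      · obtain ⟨b, hb, rfl⟩ := Finset.mem_image.1 hA
        exact absurd (Finset.mem_singleton.1 hiA ▸ hb) hi

theorem aux_ne {m : ℕ} {B : Finset (Fin m)} (h : 2 ≤ Bᶜ.card) : partB B ≠ sPart m := by
  intro h'
  have : Bᶜ ∈ sPart m := by rw [← h']; simp [partB]
  obtain ⟨b, -, hb⟩ := Finset.mem_image.1 this
  rw [← hb] at h
  simp at h

/-- A partition all of whose cells have at most one element is the singleton partition. -/
theorem aux_exists {m : ℕ} {P : Finset (Finset (Fin m))} (hP : IsPartition P)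
    (hne : P ≠ sPart m) : ∃ A ∈ P, 2 ≤ A.card := by
  by_contra! hc
  have h1 : ∀ A ∈ P, ∃ i, A = {i} := fun A hA => Finset.card_eq_one.1 (by
    have := hc A hA
    have := Finset.card_pos.2 (hP.1 A hA)
    omega)
  apply hne
  ext A
  simp only [sPart, Finset.mem_image, Finset.mem_univ, true_and]
  constructor
  · intro hA
    obtain ⟨i, hi⟩ := h1 A hA
    exact ⟨i, hi.symm⟩
  · rintro ⟨i, rfl⟩
    obtain ⟨C, ⟨hC, hiC⟩, -⟩ := hP.2 i
    obtain ⟨j, rfl⟩ := h1 C hC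
    rwa [Finset.mem_singleton.1 hiC]

/-- Proposition 1(b): `S` is the unique minimizer of `Δ` over all partitions of `[m]`
with at least two cells iff `Δ(S) < Δ(P_B)` for all `B` with `1 ≤ |B| ≤ m−2`. -/
theorem stmt9 {m : ℕ} (hm : 3 ≤ m) {Ω : Type*} [MeasurableSpace Ω] (μ : Measure Ω)
    [IsProbabilityMeasure μ]
    {𝒳 : Fin m → Type*} [∀ i, Fintype (𝒳 i)] [∀ i, MeasurableSpace (𝒳 i)]
    [∀ i, MeasurableSingletonClass (𝒳 i)]
    (X : ∀ i, Ω → 𝒳 i) (hX : ∀ i, Measurable (X i)) :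
    (∀ P : Finset (Finset (Fin m)), IsPartition P → 2 ≤ P.card → P ≠ sPart m →
        ΔP μ X (sPart m) < ΔP μ X P)
      ↔ (∀ B : Finset (Fin m), 1 ≤ B.card → B.card ≤ m - 2 →
          ΔP μ X (sPart m) < ΔP μ X (partB B)) := by
  constructor
  · intro h B hB1 hB2
    have hc : 2 ≤ Bᶜ.card := by
      rw [Finset.card_compl, Fintype.card_fin]; omega
    exact h _ (aux_part hc) (by rw [aux_card hc]; omega) (aux_ne hc)
  · intro h P hP hk hne
    set H := HX μ X with hH
    set d := ΔP μ X (sPart m) with hd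
    have hm' : (3 : ℝ) ≤ m := by exact_mod_cast hm
    have hk' : (2 : ℝ) ≤ P.card := by exact_mod_cast hk
    have hS : ∑ i, H {i} - H Finset.univ = (m - 1) * d := by
      have e : d = (1 / ((m : ℝ) - 1)) * (∑ i, H {i} - H Finset.univ) := by
        rw [hd, ΔP, sPart, Finset.card_image_of_injective _ Finset.singleton_injective,
          Finset.sum_image (fun _ _ _ _ h => Finset.singleton_injective h)]
        simp [hH]
      rw [e]
      have : (m : ℝ) - 1 ≠ 0 := by linarith
      field_simp
    have key : ∀ A ∈ P, 2 ≤ A.card → ∑ i ∈ A, H {i} - H A < ((A.card : ℝ) - 1) * d := by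
      intro A hA hA2
      have hAm : A.card ≤ m := by simpa using Finset.card_le_univ A
      have hlt : A.card < m := by
        refine lt_of_le_of_ne hAm fun hEq => ?_
        have hu : A = Finset.univ := (Finset.card_eq_iff_eq_univ A).1 (by simpa using hEq)
        have hsub : P ⊆ {A} := by
          intro C hC
          obtain ⟨i, hi⟩ := hP.1 C hC
          exact Finset.mem_singleton.2
            ((hP.2 i).unique ⟨hC, hi⟩ ⟨hA, by rw [hu]; exact Finset.mem_univ i⟩)
        have := Finset.card_le_card hsub
        simp at this
        omega
      have hcc : Aᶜ.card = m - A.card := by rw [Finset.card_compl, Fintype.card_fin]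
      have h2 : 2 ≤ Aᶜᶜ.card := by rwa [compl_compl]
      have := h Aᶜ (by omega) (by omega)
      rw [ΔP, aux_card h2, aux_sumB h2, compl_compl, hcc, ← hH] at this
      push_cast [Nat.cast_sub hAm] at this
      have hpos : (0 : ℝ) < (m : ℝ) - A.card := by
        have : (A.card : ℝ) < m := by exact_mod_cast hlt
        linarith
      rw [add_sub_cancel_right, one_div, inv_mul_eq_div, lt_div_iff₀ hpos] at this
      have hs := Finset.sum_add_sum_compl A (fun i => H {i})
      linarith
    have hsum : ∑ A ∈ P, (∑ i ∈ A, H {i} - H A) < ∑ A ∈ P, ((A.card : ℝ) - 1) * d := by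
      obtain ⟨A, hA, hA2⟩ := aux_exists hP hne
      refine Finset.sum_lt_sum (fun C hC => ?_) ⟨A, hA, key A hA hA2⟩
      by_cases hC2 : 2 ≤ C.card
      · exact (key C hC hC2).le
      · have := Finset.card_pos.2 (hP.1 C hC)
        obtain ⟨i, rfl⟩ := Finset.card_eq_one.1 (show C.card = 1 by omega)
        simp
    have hcard : ∑ A ∈ P, (A.card : ℝ) = m := by
      have := aux_sum hP (fun _ => (1 : ℝ))
      simpa using this
    rw [Finset.sum_sub_distrib, aux_sum hP, ← Finset.sum_mul, Finset.sum_sub_distrib, hcard] at hsum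
    simp only [Finset.sum_const, nsmul_eq_mul, mul_one] at hsum
    rw [ΔP, one_div, inv_mul_eq_div, lt_div_iff₀ (by linarith), ← hH]
    linarith
end

section
/- Suppose X_1,…,X_m are isentropic, m ≥ 2. Define g(k) := H(X_{[k]} | X_{[m]\[k]}) for 1 ≤ k ≤ m−1 and g(m) := H(X_{[m]}), where [k] = {1,…,k}. Then the function k ↦ g(k)/k is non-decreasing on {1,…,m}; equivalently, k·g(k+1) − (k+1)·g(k) ≥ 0 for all 1 ≤ k ≤ m−1. (Appendix A.) -/
open MeasureTheory Finset

/-- The set `[k] = {1,…,k}`, viewed inside `Fin m` as the first `k` indices. -/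
def Ik {m : ℕ} (k : ℕ) : Finset (Fin m) :=
  Finset.univ.filter fun i : Fin m => (i : ℕ) < k

lemma aux_real {S T R : Type*} [Fintype S] [Fintype T] [Fintype R] (p : S → T → R → ℝ)
    (hp : ∀ u v w, 0 ≤ p u v w) :
    (∑ u, ∑ v, ∑ w, Real.negMulLog (p u v w)) + ∑ u, Real.negMulLog (∑ v, ∑ w, p u v w) ≤
      (∑ u, ∑ v, Real.negMulLog (∑ w, p u v w)) + ∑ u, ∑ w, Real.negMulLog (∑ v, p u v w) := by
  rw [← Finset.sum_add_distrib, ← Finset.sum_add_distrib]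
  refine Finset.sum_le_sum fun u _ => ?_
  set a : T → ℝ := fun v => ∑ w, p u v w with ha
  set b : R → ℝ := fun w => ∑ v, p u v w with hb
  set c : ℝ := ∑ v, ∑ w, p u v w with hc
  have hac : ∑ v, a v = c := rfl
  have hbc : ∑ w, b w = c := by rw [hb, hc, Finset.sum_comm]
  have h1 : Real.negMulLog c = ∑ v, ∑ w, -(p u v w * Real.log c) := by
    simp only [Finset.sum_neg_distrib, ← Finset.sum_mul]
    rw [Real.negMulLog]; ring
  have h2 : ∑ v, Real.negMulLog (a v) = ∑ v, ∑ w, -(p u v w * Real.log (a v)) := by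
    refine Finset.sum_congr rfl fun v _ => ?_
    simp only [Finset.sum_neg_distrib, ← Finset.sum_mul]
    rw [Real.negMulLog]; ring
  have h3 : ∑ w, Real.negMulLog (b w) = ∑ v, ∑ w, -(p u v w * Real.log (b w)) := by
    rw [Finset.sum_comm]
    refine Finset.sum_congr rfl fun w _ => ?_
    simp only [Finset.sum_neg_distrib, ← Finset.sum_mul]
    rw [Real.negMulLog]; ring
  have h4 : ∑ v, ∑ w, (p u v w - a v * b w / c) = 0 := by
    simp only [Finset.sum_sub_distrib, ← Finset.sum_div, ← Finset.mul_sum, ← Finset.sum_mul]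
    rw [hbc, hac, mul_self_div_self, sub_self]
  change _ + Real.negMulLog c ≤ ∑ v, Real.negMulLog (a v) + ∑ w, Real.negMulLog (b w)
  rw [h1, h2, h3, ← sub_nonneg, ← h4]
  simp only [← Finset.sum_add_distrib, ← Finset.sum_sub_distrib]
  refine Finset.sum_le_sum fun v _ => Finset.sum_le_sum fun w _ => ?_
  have ha0 : ∀ v, 0 ≤ a v := fun v => Finset.sum_nonneg fun w _ => hp u v w
  have hb0 : ∀ w, 0 ≤ b w := fun w => Finset.sum_nonneg fun v _ => hp u v w
  have hc0 : 0 ≤ c := Finset.sum_nonneg fun v _ => ha0 v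
  rcases (hp u v w).eq_or_lt with h0 | h0
  · rw [← h0]
    have : 0 ≤ a v * b w / c := div_nonneg (mul_nonneg (ha0 v) (hb0 w)) hc0
    simp [this]
  · have hpa : p u v w ≤ a v :=
      Finset.single_le_sum (f := fun w => p u v w) (fun w _ => hp u v w) (Finset.mem_univ w)
    have hpb : p u v w ≤ b w :=
      Finset.single_le_sum (f := fun v => p u v w) (fun v _ => hp u v w) (Finset.mem_univ v)
    have hpc : a v ≤ c := Finset.single_le_sum (f := a) (fun v _ => ha0 v) (Finset.mem_univ v)
    have ha1 : 0 < a v := h0.trans_le hpa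
    have hb1 : 0 < b w := h0.trans_le hpb
    have hc1 : 0 < c := ha1.trans_le hpc
    have hl := Real.log_le_sub_one_of_pos (x := a v * b w / (c * p u v w)) (by positivity)
    rw [Real.log_div (by positivity) (by positivity), Real.log_mul ha1.ne' hb1.ne',
      Real.log_mul hc1.ne' h0.ne'] at hl
    have := mul_le_mul_of_nonneg_left hl h0.le
    have e : p u v w * (a v * b w / (c * p u v w) - 1) = a v * b w / c - p u v w := by
      field_simp
    rw [e] at this
    rw [Real.negMulLog]
    linarith

lemma aux_inj {Ω : Type*} [MeasurableSpace Ω] (μ : Measure Ω)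
    {S T : Type*} [Fintype S] [Fintype T] (Y : Ω → S) (f : S → T) (hf : Function.Injective f) :
    shannonEntropy μ (fun ω => f (Y ω)) = shannonEntropy μ Y := by
  classical
  unfold shannonEntropy
  have h1 : ∀ s, Y ⁻¹' {s} = (fun ω => f (Y ω)) ⁻¹' {f s} := by
    intro s; ext ω; simp [hf.eq_iff]
  simp only [h1]
  symm
  refine Finset.sum_of_injOn f hf.injOn (by simp) ?_ (fun _ _ => rfl)
  intro t _ ht
  have : (fun ω => f (Y ω)) ⁻¹' {t} = ∅ := by
    ext ω
    simp only [Set.mem_preimage, Set.mem_singleton_iff, Set.mem_empty_iff_false, iff_false]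
    rintro rfl
    exact ht (by simp)
  rw [this]; simp

lemma aux_marg {Ω : Type*} [MeasurableSpace Ω] (μ : Measure Ω) [IsProbabilityMeasure μ]
    {T : Type*} [Fintype T] (Z : Ω → T) (hZ : ∀ t, MeasurableSet (Z ⁻¹' {t})) (E : Set Ω)
    (hE : MeasurableSet E) :
    (μ E).toReal = ∑ t, (μ (E ∩ Z ⁻¹' {t})).toReal := by
  have h : E = ⋃ t ∈ (Finset.univ : Finset T), (E ∩ Z ⁻¹' {t}) := by
    ext ω; simp
  conv_lhs => rw [h]
  rw [measure_biUnion_finset, ENNReal.toReal_sum]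
  · intro a _; exact measure_ne_top _ _
  · intro a _ b _ hab
    refine Set.disjoint_left.2 ?_
    rintro ω ⟨_, h1⟩ ⟨_, h2⟩
    exact hab (h1.symm.trans h2)
  · intro t _; exact hE.inter (hZ t)

lemma aux_submod {Ω : Type*} [MeasurableSpace Ω] (μ : Measure Ω) [IsProbabilityMeasure μ]
    {S T R : Type*} [Fintype S] [Fintype T] [Fintype R] (U : Ω → S) (V : Ω → T) (W : Ω → R)
    (hU : ∀ t, MeasurableSet (U ⁻¹' {t})) (hV : ∀ t, MeasurableSet (V ⁻¹' {t}))
    (hW : ∀ t, MeasurableSet (W ⁻¹' {t})) :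
    shannonEntropy μ (fun ω => ((U ω, V ω), W ω)) + shannonEntropy μ U ≤
      shannonEntropy μ (fun ω => (U ω, V ω)) + shannonEntropy μ (fun ω => (U ω, W ω)) := by
  have key := aux_real (fun u v w => (μ (U ⁻¹' {u} ∩ V ⁻¹' {v} ∩ W ⁻¹' {w})).toReal)
    (fun _ _ _ => ENNReal.toReal_nonneg)
  have e1 : ∀ u v, ∑ w, (μ (U ⁻¹' {u} ∩ V ⁻¹' {v} ∩ W ⁻¹' {w})).toReal =
      (μ (U ⁻¹' {u} ∩ V ⁻¹' {v})).toReal := fun u v =>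
    (aux_marg μ W hW _ ((hU u).inter (hV v))).symm
  have e2 : ∀ u w, ∑ v, (μ (U ⁻¹' {u} ∩ V ⁻¹' {v} ∩ W ⁻¹' {w})).toReal =
      (μ (U ⁻¹' {u} ∩ W ⁻¹' {w})).toReal := fun u w => by
    rw [aux_marg μ V hV _ ((hU u).inter (hW w))]
    refine Finset.sum_congr rfl fun v _ => ?_
    rw [Set.inter_right_comm]
  have e3 : ∀ u, ∑ v, (μ (U ⁻¹' {u} ∩ V ⁻¹' {v})).toReal =
      (μ (U ⁻¹' {u})).toReal := fun u => (aux_marg μ V hV _ (hU u)).symm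
  simp only [e1, e2, e3] at key
  unfold shannonEntropy
  simp only [Fintype.sum_prod_type]
  convert key using 10 <;> (ext ω; simp [and_assoc])

lemma aux_HX {m : ℕ} {Ω : Type*} [MeasurableSpace Ω] (μ : Measure Ω)
    [IsProbabilityMeasure μ]
    {𝒳 : Fin m → Type*} [∀ i, Fintype (𝒳 i)] [∀ i, MeasurableSpace (𝒳 i)]
    [∀ i, MeasurableSingletonClass (𝒳 i)]
    (X : ∀ i, Ω → 𝒳 i) (hX : ∀ i, Measurable (X i)) (A : Finset (Fin m)) (i j : Fin m) :
    HX μ X (insert j (insert i A)) + HX μ X A ≤ HX μ X (insert i A) + HX μ X (insert j A) := by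
  have hA : ∀ s, MeasurableSet ((fun ω => fun i : A => X i ω) ⁻¹' {s}) := fun s =>
    (measurable_pi_lambda _ fun i : A => hX i) (measurableSet_singleton s)
  have hs : ∀ i s, MeasurableSet (X i ⁻¹' {s}) := fun i s => hX i (measurableSet_singleton s)
  have key := aux_submod μ (fun ω => fun i : A => X i ω) (X i) (X j) hA (hs i) (hs j)
  have one : ∀ i, HX μ X (insert i A) =
      shannonEntropy μ (fun ω => ((fun i : A => X i ω), X i ω)) := by
    intro i
    refine (aux_inj μ (fun ω => fun l : (insert i A : Finset (Fin m)) => X l ω)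
      (fun y => ((fun l : A => y ⟨l, Finset.mem_insert_of_mem l.2⟩),
        y ⟨i, Finset.mem_insert_self _ _⟩)) ?_).symm
    intro y z h
    simp only [Prod.mk.injEq] at h
    ext ⟨l, hl⟩
    rcases Finset.mem_insert.1 hl with rfl | h'
    · exact h.2
    · exact congrFun h.1 ⟨l, h'⟩
  have two : HX μ X (insert j (insert i A)) =
      shannonEntropy μ (fun ω => (((fun i : A => X i ω), X i ω), X j ω)) := by
    refine (aux_inj μ (fun ω => fun l : (insert j (insert i A) : Finset (Fin m)) => X l ω)
      (fun y => (((fun l : A => y ⟨l, Finset.mem_insert_of_mem (Finset.mem_insert_of_mem l.2)⟩),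
        y ⟨i, Finset.mem_insert_of_mem (Finset.mem_insert_self _ _)⟩),
        y ⟨j, Finset.mem_insert_self _ _⟩)) ?_).symm
    intro y z h
    simp only [Prod.mk.injEq] at h
    ext ⟨l, hl⟩
    rcases Finset.mem_insert.1 hl with rfl | h'
    · exact h.2
    · rcases Finset.mem_insert.1 h' with rfl | h''
      · exact h.1.2
      · exact congrFun h.1.1 ⟨l, h''⟩
  rw [one, one, two]
  exact key

lemma aux_empty {m : ℕ} {Ω : Type*} [MeasurableSpace Ω] (μ : Measure Ω)
    [IsProbabilityMeasure μ]
    {𝒳 : Fin m → Type*} [∀ i, Fintype (𝒳 i)] (X : ∀ i, Ω → 𝒳 i) : HX μ X ∅ = 0 := by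
  unfold HX shannonEntropy
  refine Finset.sum_eq_zero fun s _ => ?_
  have : (fun ω => fun i : (∅ : Finset (Fin m)) => X i ω) ⁻¹' {s} = Set.univ := by
    ext ω
    simp only [Set.mem_preimage, Set.mem_singleton_iff, Set.mem_univ, iff_true]
    ext ⟨i, hi⟩
    simp at hi
  rw [this]; simp

lemma aux_card_s12 {m k : ℕ} (hk : k ≤ m) : (Ik k : Finset (Fin m)).card = k := by
  unfold Ik
  rw [Fin.card_filter_val_lt]; omega

lemma aux_insert {m k : ℕ} (hk : k < m) :
    insert ⟨k, hk⟩ (Ik k) = (Ik (k + 1) : Finset (Fin m)) := by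
  ext i
  simp only [Ik, Finset.mem_insert, Finset.mem_filter, Finset.mem_univ, true_and, Fin.ext_iff]
  omega

/-- Appendix A: for isentropic random variables, with
`g(k) = H(X_{[k]} | X_{[m]\[k]})` for `1 ≤ k ≤ m−1` and `g(m) = H(X_{[m]})`,
the function `k ↦ g(k)/k` is non-decreasing on `{1,…,m}`; equivalently,
`k·g(k+1) − (k+1)·g(k) ≥ 0` for all `1 ≤ k ≤ m−1`. -/
theorem stmt12 {m : ℕ} (hm : 2 ≤ m) {Ω : Type*} [MeasurableSpace Ω] (μ : Measure Ω)
    [IsProbabilityMeasure μ]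
    {𝒳 : Fin m → Type*} [∀ i, Fintype (𝒳 i)] [∀ i, MeasurableSpace (𝒳 i)]
    [∀ i, MeasurableSingletonClass (𝒳 i)]
    (X : ∀ i, Ω → 𝒳 i) (hX : ∀ i, Measurable (X i))
    (hiso : ∀ A B : Finset (Fin m), A.Nonempty → B.Nonempty → A.card = B.card →
        HX μ X A = HX μ X B)
    (g : ℕ → ℝ)
    (hg : ∀ k, 1 ≤ k → k ≤ m - 1 → g k = condEnt μ X (Ik k) (Ik k)ᶜ)
    (hgm : g m = HX μ X Finset.univ) :
    (∀ k l, 1 ≤ k → k ≤ l → l ≤ m → g k / (k : ℝ) ≤ g l / (l : ℝ)) ∧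
    (∀ k, 1 ≤ k → k ≤ m - 1 → (k : ℝ) * g (k + 1) - ((k : ℝ) + 1) * g k ≥ 0) := by
  have hIm : (Ik m : Finset (Fin m)) = Finset.univ := by
    ext i; simp [Ik]
  have hI0 : (Ik 0 : Finset (Fin m)) = ∅ := by
    ext i; simp [Ik]
  set h : ℕ → ℝ := fun k => HX μ X (Ik k) with hh
  have h0 : h 0 = 0 := by rw [hh]; simp only [hI0]; exact aux_empty μ X
  -- concavity of the entropy profile
  have hconc : ∀ k, k + 2 ≤ m → h (k + 2) + h k ≤ 2 * h (k + 1) := by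
    intro k hk
    have h1 : k < m := by omega
    have h2 : k + 1 < m := by omega
    have key := aux_HX μ X hX (Ik k) ⟨k, h1⟩ ⟨k + 1, h2⟩
    rw [aux_insert h1, aux_insert h2] at key
    have e : HX μ X (insert ⟨k + 1, h2⟩ (Ik k)) = HX μ X (Ik (k + 1)) := by
      apply hiso
      · exact Finset.insert_nonempty _ _
      · rw [← aux_insert h1]; exact Finset.insert_nonempty _ _
      · rw [Finset.card_insert_of_notMem (by simp [Ik]), aux_card_s12 h1.le, aux_card_s12 h2.le]
    rw [e] at key
    have : h (k + 2) + h k ≤ h (k + 1) + h (k + 1) := key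
    linarith
  have hgk : ∀ k, 1 ≤ k → k ≤ m → g k = h m - h (m - k) := by
    intro k hk1 hkm
    rcases hkm.eq_or_lt with rfl | hlt
    · rw [hgm, Nat.sub_self, h0, sub_zero, hh]; simp only [hIm]
    · rw [hg k hk1 (by omega), condEnt, Finset.union_compl]
      have hc : ((Ik k : Finset (Fin m))ᶜ).card = m - k := by
        rw [Finset.card_compl, aux_card_s12 hkm, Fintype.card_fin]
      have hc' : (Ik (m - k) : Finset (Fin m)).card = m - k := aux_card_s12 (by omega)
      rw [hiso (Ik k)ᶜ (Ik (m - k)) (Finset.card_pos.1 (by omega))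
        (Finset.card_pos.1 (by omega)) (by rw [hc, hc'])]
      simp only [hh, hIm]
  have hstep : ∀ k, 1 ≤ k → k ≤ m - 1 → (k : ℝ) * g (k + 1) - ((k : ℝ) + 1) * g k ≥ 0 := by
    intro k hk
    induction k, hk using Nat.le_induction with
    | base =>
      intro _
      rw [hgk 1 le_rfl (by omega), hgk 2 (by omega) hm]
      obtain ⟨n, rfl⟩ : ∃ n, m = n + 2 := ⟨m - 2, by omega⟩
      have := hconc n le_rfl
      simp only [Nat.add_sub_cancel, show n + 2 - 1 = n + 1 by omega]
      push_cast
      linarith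
    | succ k hk ih =>
      intro hk'
      replace ih := ih (by omega)
      obtain ⟨n, rfl⟩ : ∃ n, m = n + (k + 2) := ⟨m - (k + 2), by omega⟩
      have hc := hconc n (by omega)
      rw [hgk k hk (by omega), hgk (k + 1) (by omega) (by omega)] at ih
      rw [hgk (k + 1) (by omega) (by omega), hgk (k + 1 + 1) (by omega) (by omega)]
      rw [show n + (k + 2) - k = n + 2 by omega, show n + (k + 2) - (k + 1) = n + 1 by omega] at ih
      rw [show n + (k + 2) - (k + 1) = n + 1 by omega,
        show n + (k + 2) - (k + 1 + 1) = n by omega]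
      push_cast
      nlinarith [mul_le_mul_of_nonneg_left hc (by positivity : (0 : ℝ) ≤ (k : ℝ) + 1)]
  refine ⟨?_, hstep⟩
  intro k l hk hkl
  induction l, hkl using Nat.le_induction with
  | base => intro _; exact le_rfl
  | succ l hl ih =>
    intro hlm
    refine (ih (by omega)).trans ?_
    have hl0 : (0 : ℝ) < l := by exact_mod_cast (by omega : 0 < l)
    have := hstep l (by omega) (by omega)
    push_cast
    rw [div_le_div_iff₀ hl0 (by positivity)]
    linarith
end
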